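/- Let P be the infinite Pascal matrix, P_{ij} = \binom{i}{j}, and D the diagonal matrix with D_{ii} = (-1)^i. Define powers of the lower triangular matrices P ± D entrywise by ((P±D)^{n+1})_{ij} = ∑_{k=j}^{i} ((P±D)^n)_{ik} (P±D)_{kj}, and powers of the upper triangular matrices Pᵀ ± D by ((Pᵀ±D)^{n+1})_{ij} = ∑_{k=i}^{j} ((Pᵀ±D)^n)_{ik} (Pᵀ±D)_{kj}. Then for every positive integer n and all i, j ∈ ℕ: (a) ∑_{k=j}^{i} \binom{i}{k}(-1)^k ((P+D)^n)_{kj} = ((P+D)^n)_{ij} and ∑_{k=j}^{i} \binom{i}{k}(-1)^k ((P-D)^n)_{kj} = -((P-D)^n)_{ij}; (b) ∑_{k=i}^{j} \binom{k}{i}(-1)^k ((Pᵀ+D)^n)_{kj} = ((Pᵀ+D)^n)_{ij} and ∑_{k=i}^{j} \binom{k}{i}(-1)^k ((Pᵀ-D)^n)_{kj} = -((Pᵀ-D)^n)_{ij}. That is, the columns of (P+D)^n are invariant and the columns of (P-D)^n are inverse invariant sequences of the first kind, and the columns of (Pᵀ+D)^n are invariant and the columns of (Pᵀ-D)^n are inverse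 invariant sequences of the second kind. -/

import Mathlib

/-- The lower triangular matrix `P + D`. -/
noncomputable def Ppl (i j : ℕ) : ℝ :=
  (Nat.choose i j : ℝ) + (if i = j then (-1 : ℝ) ^ i else 0)

/-- The lower triangular matrix `P - D`. -/
noncomputable def Pmi (i j : ℕ) : ℝ :=
  (Nat.choose i j : ℝ) - (if i = j then (-1 : ℝ) ^ i else 0)

/-- The upper triangular matrix `Pᵀ + D`. -/
noncomputable def PTpl (i j : ℕ) : ℝ :=
  (Nat.choose j i : ℝ) + (if i = j then (-1 : ℝ) ^ i else 0)

/-- The upper triangular matrix `Pᵀ - D`. -/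
noncomputable def PTmi (i j : ℕ) : ℝ :=
  (Nat.choose j i : ℝ) - (if i = j then (-1 : ℝ) ^ i else 0)

/-- Entrywise powers of a lower triangular infinite matrix. -/
noncomputable def lowPow (X : ℕ → ℕ → ℝ) : ℕ → ℕ → ℕ → ℝ
  | 0 => fun i j => if i = j then 1 else 0
  | n + 1 => fun i j => ∑ k ∈ Finset.Icc j i, lowPow X n i k * X k j

/-- Entrywise powers of an upper triangular infinite matrix. -/
noncomputable def upPow (X : ℕ → ℕ → ℝ) : ℕ → ℕ → ℕ → ℝ
  | 0 => fun i j => if i = j then 1 else 0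
  | n + 1 => fun i j => ∑ k ∈ Finset.Icc i j, upPow X n i k * X k j

/-
Pascal's matrix `P` satisfies `(P * D) ^ 2 = 1`, which together with `D ^ 2 = 1` says
`P * D * P = D`. Hence `P * D * (P ± D) = D ± P = ±(P ± D)`, and multiplying on the right by further
factors `P ± D` gives (a). The transposed identity `Pᵀ * D * Pᵀ = D` gives (b) in the same way.
Everything takes place in the incidence algebra of `ℕ`, the ring of upper triangular infinite
matrices, where (a) appears transposed, with `D * Pᵀ` multiplying on the right.
-/

section Ring

variable {A : Type*}

section Semiring

variable [Semiring A] {p d : A} {n : ℕ}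

theorem mul_mul_add_pow_eq (hp : p * d * p = d) (hd : d * d = 1) (hn : n ≠ 0) :
    p * d * (p + d) ^ n = (p + d) ^ n := by
  obtain ⟨m, rfl⟩ := Nat.exists_eq_succ_of_ne_zero hn
  have base : p * d * (p + d) = p + d := by
    rw [mul_add, hp, mul_assoc, hd, mul_one, add_comm]
  rw [pow_succ', ← mul_assoc, base]

theorem add_pow_mul_mul_eq (hp : p * d * p = d) (hd : d * d = 1) (hn : n ≠ 0) :
    (p + d) ^ n * (d * p) = (p + d) ^ n := by
  obtain ⟨m, rfl⟩ := Nat.exists_eq_succ_of_ne_zero hn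
  have base : (p + d) * (d * p) = p + d := by
    rw [add_mul, ← mul_assoc, hp, ← mul_assoc, hd, one_mul, add_comm]
  rw [pow_succ, mul_assoc, base]

end Semiring

variable [Ring A] {p d : A} {n : ℕ}

theorem mul_mul_sub_pow_eq_neg (hp : p * d * p = d) (hd : d * d = 1) (hn : n ≠ 0) :
    p * d * (p - d) ^ n = -(p - d) ^ n := by
  have h : p * -d * (p + -d) ^ n = (p + -d) ^ n :=
    mul_mul_add_pow_eq (by simp [hp]) (by simp [hd]) hn
  rwa [mul_neg, neg_mul, neg_eq_iff_eq_neg, ← sub_eq_add_neg] at h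

theorem sub_pow_mul_mul_eq_neg (hp : p * d * p = d) (hd : d * d = 1) (hn : n ≠ 0) :
    (p - d) ^ n * (d * p) = -(p - d) ^ n := by
  have h : (p + -d) ^ n * (-d * p) = (p + -d) ^ n :=
    add_pow_mul_mul_eq (by simp [hp]) (by simp [hd]) hn
  rwa [neg_mul, mul_neg, neg_eq_iff_eq_neg, ← sub_eq_add_neg] at h

end Ring

theorem sum_Icc_choose_mul_neg_one_pow_mul_choose (i j : ℕ) :
    ∑ k ∈ Finset.Icc i j, (k.choose i : ℤ) * (-1) ^ k * j.choose k =
      if i = j then (-1) ^ i else 0 := by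
  obtain hji | hij := lt_or_ge j i
  · rw [Finset.Icc_eq_empty_of_lt hji, Finset.sum_empty, if_neg hji.ne']
  obtain ⟨m, rfl⟩ := Nat.exists_eq_add_of_le hij
  have trinomial_revision (t : ℕ) :
      ((i + m).choose (i + t) : ℤ) * (i + t).choose i = (i + m).choose i * m.choose t := by
    have h := Nat.choose_mul (n := i + m) (Nat.le_add_right i t)
    rw [Nat.add_sub_cancel_left, Nat.add_sub_cancel_left] at h
    exact_mod_cast h
  calc
    ∑ k ∈ Finset.Icc i (i + m), (k.choose i : ℤ) * (-1) ^ k * (i + m).choose k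
        = ∑ t ∈ Finset.range (m + 1),
            ((i + t).choose i : ℤ) * (-1) ^ (i + t) * (i + m).choose (i + t) := by
      rw [← Finset.Ico_add_one_right_eq_Icc, Finset.sum_Ico_eq_sum_range, add_assoc,
        Nat.add_sub_cancel_left]
    _ = (-1) ^ i * (i + m).choose i * ∑ t ∈ Finset.range (m + 1), (-1) ^ t * (m.choose t : ℤ) := by
      rw [Finset.mul_sum]
      refine Finset.sum_congr rfl fun t _ ↦ ?_
      linear_combination (-1 : ℤ) ^ (i + t) * trinomial_revision t
    _ = if i = i + m then (-1) ^ i else 0 := by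
      rw [Int.alternating_sum_range_choose]
      obtain rfl | hm := eq_or_ne m 0 <;> simp [*]

section UpperTriangular

variable (R : Type*) [Ring R]

/-- The transpose `Pᵀ` of the infinite Pascal matrix, as an element of the incidence algebra of `ℕ`,
that is, of the ring of upper triangular infinite matrices. -/
def upperPascal : IncidenceAlgebra R ℕ where
  toFun i j := j.choose i
  eq_zero_of_not_le' i j hij := by rw [Nat.choose_eq_zero_of_lt (not_le.1 hij), Nat.cast_zero]

/-- The diagonal matrix `D` with entries `(-1) ^ i`, as an element of the incidence algebra of
`ℕ`. -/
def altDiagonal : IncidenceAlgebra R ℕ where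
  toFun i j := if i = j then (-1) ^ i else 0
  eq_zero_of_not_le' _ _ hij := if_neg fun h ↦ hij h.le

variable {R}

theorem upperPascal_apply (i j : ℕ) : upperPascal R i j = j.choose i := rfl

theorem altDiagonal_apply (i j : ℕ) : altDiagonal R i j = if i = j then (-1) ^ i else 0 := rfl

theorem altDiagonal_apply_comm (i j : ℕ) : altDiagonal R i j = altDiagonal R j i := by
  obtain rfl | hij := eq_or_ne i j
  · rfl
  · rw [altDiagonal_apply, altDiagonal_apply, if_neg hij, if_neg hij.symm]

theorem mul_altDiagonal_apply (F : IncidenceAlgebra R ℕ) (i j : ℕ) :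
    (F * altDiagonal R) i j = F i j * (-1) ^ j := by
  by_cases hij : i ≤ j
  · simp [altDiagonal_apply, hij]
  · rw [IncidenceAlgebra.apply_eq_zero_of_not_le hij, IncidenceAlgebra.apply_eq_zero_of_not_le hij,
      zero_mul]

theorem altDiagonal_mul_apply (F : IncidenceAlgebra R ℕ) (i j : ℕ) :
    (altDiagonal R * F) i j = (-1) ^ i * F i j := by
  by_cases hij : i ≤ j
  · simp [altDiagonal_apply, hij]
  · rw [IncidenceAlgebra.apply_eq_zero_of_not_le hij, IncidenceAlgebra.apply_eq_zero_of_not_le hij,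
      mul_zero]

theorem altDiagonal_mul_self : altDiagonal R * altDiagonal R = 1 := by
  ext i j
  rw [altDiagonal_mul_apply, altDiagonal_apply, mul_ite, mul_zero, ← pow_add,
    (Even.add_self i).neg_one_pow, IncidenceAlgebra.one_apply]

theorem upperPascal_mul_altDiagonal_mul_upperPascal :
    upperPascal R * altDiagonal R * upperPascal R = altDiagonal R := by
  ext i j
  simp only [IncidenceAlgebra.mul_apply _ (upperPascal R), mul_altDiagonal_apply,
    upperPascal_apply, altDiagonal_apply]
  exact_mod_cast congrArg (Int.cast : ℤ → R) (sum_Icc_choose_mul_neg_one_pow_mul_choose i j)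

theorem upperPascal_mul_altDiagonal_mul_apply (F : IncidenceAlgebra R ℕ) (i j : ℕ) :
    (upperPascal R * altDiagonal R * F) i j =
      ∑ k ∈ Finset.Icc i j, (k.choose i : R) * (-1) ^ k * F k j := by
  simp only [IncidenceAlgebra.mul_apply _ F, mul_altDiagonal_apply, upperPascal_apply]

theorem mul_altDiagonal_mul_upperPascal_apply (F : IncidenceAlgebra R ℕ) (i j : ℕ) :
    (F * (altDiagonal R * upperPascal R)) j i =
      ∑ k ∈ Finset.Icc j i, (i.choose k : R) * (-1) ^ k * F j k := by
  rw [IncidenceAlgebra.mul_apply]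
  refine Finset.sum_congr rfl fun k _ ↦ ?_
  have sign_comm (x : R) : Commute ((-1) ^ k) x := (Commute.neg_one_left x).pow_left k
  rw [altDiagonal_mul_apply, upperPascal_apply, (sign_comm _).eq]
  exact (((Nat.cast_commute _ _).mul_left (sign_comm _)).eq).symm

theorem stmt18_general {n : ℕ} (hn : 1 ≤ n) (i j : ℕ) :
    (∑ k ∈ Finset.Icc j i, (i.choose k : R) * (-1) ^ k * ((upperPascal R + altDiagonal R) ^ n) j k
      = ((upperPascal R + altDiagonal R) ^ n) j i) ∧
    (∑ k ∈ Finset.Icc j i, (i.choose k : R) * (-1) ^ k * ((upperPascal R - altDiagonal R) ^ n) j k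
      = -((upperPascal R - altDiagonal R) ^ n) j i) ∧
    (∑ k ∈ Finset.Icc i j, (k.choose i : R) * (-1) ^ k * ((upperPascal R + altDiagonal R) ^ n) k j
      = ((upperPascal R + altDiagonal R) ^ n) i j) ∧
    (∑ k ∈ Finset.Icc i j, (k.choose i : R) * (-1) ^ k * ((upperPascal R - altDiagonal R) ^ n) k j
      = -((upperPascal R - altDiagonal R) ^ n) i j) := by
  have hp := upperPascal_mul_altDiagonal_mul_upperPascal (R := R)
  have hd := altDiagonal_mul_self (R := R)
  have hn : n ≠ 0 := Nat.one_le_iff_ne_zero.1 hn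
  simp only [← mul_altDiagonal_mul_upperPascal_apply, ← upperPascal_mul_altDiagonal_mul_apply,
    ← IncidenceAlgebra.neg_apply]
  rw [add_pow_mul_mul_eq hp hd hn, sub_pow_mul_mul_eq_neg hp hd hn,
    mul_mul_add_pow_eq hp hd hn, mul_mul_sub_pow_eq_neg hp hd hn]
  exact ⟨rfl, rfl, rfl, rfl⟩

end UpperTriangular

section EntrywisePowers

variable (n i j : ℕ)

theorem upPow_coe (F : IncidenceAlgebra ℝ ℕ) : upPow F n i j = (F ^ n) i j := by
  induction n generalizing j with
  | zero => rw [pow_zero, IncidenceAlgebra.one_apply, upPow]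
  | succ n ih => simp only [upPow, ih, pow_succ, IncidenceAlgebra.mul_apply]

theorem lowPow_transpose_coe (F : IncidenceAlgebra ℝ ℕ) :
    lowPow (fun k l ↦ F l k) n i j = (F ^ n) j i := by
  induction n generalizing j with
  | zero => simp only [pow_zero, IncidenceAlgebra.one_apply, lowPow, eq_comm]
  | succ n ih => simp only [lowPow, ih, pow_succ', IncidenceAlgebra.mul_apply, mul_comm]

theorem upPow_PTpl : upPow PTpl n i j = ((upperPascal ℝ + altDiagonal ℝ) ^ n) i j :=
  upPow_coe n i j (upperPascal ℝ + altDiagonal ℝ)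

theorem upPow_PTmi : upPow PTmi n i j = ((upperPascal ℝ - altDiagonal ℝ) ^ n) i j :=
  upPow_coe n i j (upperPascal ℝ - altDiagonal ℝ)

theorem lowPow_Ppl : lowPow Ppl n i j = ((upperPascal ℝ + altDiagonal ℝ) ^ n) j i := by
  rw [← lowPow_transpose_coe]
  congr 1
  funext k l
  rw [IncidenceAlgebra.add_apply, altDiagonal_apply_comm l k]
  rfl

theorem lowPow_Pmi : lowPow Pmi n i j = ((upperPascal ℝ - altDiagonal ℝ) ^ n) j i := by
  rw [← lowPow_transpose_coe]
  congr 1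
  funext k l
  rw [IncidenceAlgebra.sub_apply, altDiagonal_apply_comm l k]
  rfl

end EntrywisePowers

/-- for `n ≥ 1`, the columns of `(P+D)^n` are invariant and the
columns of `(P-D)^n` are inverse invariant sequences of the first kind, and the
columns of `(Pᵀ+D)^n` are invariant and the columns of `(Pᵀ-D)^n` are inverse
invariant sequences of the second kind. -/
theorem stmt18 (n : ℕ) (hn : 1 ≤ n) (i j : ℕ) :
    (∑ k ∈ Finset.Icc j i, (Nat.choose i k : ℝ) * (-1) ^ k * lowPow Ppl n k j
      = lowPow Ppl n i j) ∧
    (∑ k ∈ Finset.Icc j i, (Nat.choose i k : ℝ) * (-1) ^ k * lowPow Pmi n k j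
      = -lowPow Pmi n i j) ∧
    (∑ k ∈ Finset.Icc i j, (Nat.choose k i : ℝ) * (-1) ^ k * upPow PTpl n k j
      = upPow PTpl n i j) ∧
    (∑ k ∈ Finset.Icc i j, (Nat.choose k i : ℝ) * (-1) ^ k * upPow PTmi n k j
      = -upPow PTmi n i j) := by
  simpa only [lowPow_Ppl, lowPow_Pmi, upPow_PTpl, upPow_PTmi] using stmt18_general hn i j
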